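/- arXiv:1504.06735 — 2 statements merged into one kernel-verified Lean document; each statement's English description precedes it below -/
import Mathlib

section
/- Let X be a random field for which the boundedness condition holds. Then for all k, l ∈ R_n with k ≠ l and u_{l,i} ≥ u_{k,i} for all i, E|1{∩_{i∈R_l∖R_k}{X_i ≤ u_{l,i}}} − 1{∩_{i∈R_l}{X_i ≤ u_{l,i}}}| = O((l₁l₂ − #(R_l∖R_k))/(l₁l₂)), where # denotes cardinality and the implied constant is independent of k, l, n. -/
open MeasureTheory ProbabilityTheory Filter Set
open scoped ProbabilityTheory

noncomputable section

/-- The rectangle of indexes `R_n = {1,…,n₁} × {1,…,n₂}` in `(ℤ₊)²`. -/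
def Rn (n : ℕ × ℕ) : Finset (ℕ × ℕ) := Finset.Icc (1, 1) n

variable {Ω : Type*} [MeasureSpace Ω]

/-- Probability of an event as a real number. -/
def pr (A : Set Ω) : ℝ := (ℙ A).toReal

/-- The event `{M(I) ≤ v} = ⋂_{i ∈ I} {X_i ≤ v_i}`. -/
def noExc (X : ℕ × ℕ → Ω → ℝ) (v : ℕ × ℕ → ℝ) (I : Finset (ℕ × ℕ)) : Set Ω :=
  ⋂ i ∈ I, {ω | X i ω ≤ v i}

/-- Boundedness condition: the family `n₁n₂ · max{P(X_i > u_{n,i}) : i ≤ n}` is bounded. -/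
def BoundedCond (X : ℕ × ℕ → Ω → ℝ) (u : ℕ × ℕ → ℕ × ℕ → ℝ) : Prop :=
  ∃ B : ℝ, ∀ n : ℕ × ℕ, ∀ i ∈ Rn n, (n.1 * n.2 : ℝ) * pr {ω | X i ω > u n i} ≤ B

/-! The two indicators differ only where `X i > u l i` for some `i` lying in exactly one of the two
index sets. A union bound over those `l₁l₂ − #J` indices, each contributing `O(1 / (l₁l₂))` by the
boundedness condition, gives the estimate for every `J ⊆ R_l`, in particular for
`J = R_l ∖ R_k`. -/

open scoped symmDiff

section IndicatorBiInter

variable {ι α : Type*}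

lemma biInter_symmDiff_biInter_subset (A : ι → Set α) (s t : Set ι) :
    (⋂ i ∈ s, A i) ∆ (⋂ i ∈ t, A i) ⊆ ⋃ i ∈ s ∆ t, (A i)ᶜ := by
  intro x hx
  simp only [mem_symmDiff, mem_iInter₂, mem_iUnion₂, mem_compl_iff, exists_prop] at hx ⊢
  grind

variable [MeasurableSpace α] {μ : Measure α}

lemma integral_abs_indicator_one_sub_indicator_one {s t : Set α}
    (hs : NullMeasurableSet s μ) (ht : NullMeasurableSet t μ) :
    ∫ x, |s.indicator (fun _ => (1 : ℝ)) x - t.indicator (fun _ => (1 : ℝ)) x| ∂μ =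
      μ.real (s ∆ t) := by
  calc ∫ x, |s.indicator (fun _ => (1 : ℝ)) x - t.indicator (fun _ => (1 : ℝ)) x| ∂μ
      = ∫ x, (s ∆ t).indicator (fun _ => (1 : ℝ)) x ∂μ := by
        congr 1 with x
        rw [← apply_indicator_symmDiff abs_neg,
          abs_of_nonneg (indicator_nonneg (fun _ _ => zero_le_one) x)]
    _ = μ.real (s ∆ t) := by
        rw [integral_indicator₀ (hs.symmDiff ht), setIntegral_const, smul_eq_mul, mul_one]

lemma integral_abs_indicator_biInter_sub_le [DecidableEq ι] [IsFiniteMeasure μ] {A : ι → Set α}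
    (hA : ∀ i, NullMeasurableSet (A i) μ) (s t : Finset ι) :
    ∫ x, |(⋂ i ∈ s, A i).indicator (fun _ => (1 : ℝ)) x -
        (⋂ i ∈ t, A i).indicator (fun _ => (1 : ℝ)) x| ∂μ ≤
      ∑ i ∈ s ∆ t, μ.real (A i)ᶜ := by
  have nullMeasurableSet_biInter (r : Finset ι) : NullMeasurableSet (⋂ i ∈ r, A i) μ :=
    .biInter r.countable_toSet fun i _ => hA i
  have symmDiff_subset :
      (⋂ i ∈ s, A i) ∆ (⋂ i ∈ t, A i) ⊆ ⋃ i ∈ s ∆ t, (A i)ᶜ := by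
    simpa only [← Finset.coe_symmDiff, Finset.mem_coe] using biInter_symmDiff_biInter_subset A s t
  calc _ = μ.real ((⋂ i ∈ s, A i) ∆ (⋂ i ∈ t, A i)) :=
        integral_abs_indicator_one_sub_indicator_one (nullMeasurableSet_biInter s)
          (nullMeasurableSet_biInter t)
    _ ≤ μ.real (⋃ i ∈ s ∆ t, (A i)ᶜ) := measureReal_mono symmDiff_subset (measure_ne_top _ _)
    _ ≤ ∑ i ∈ s ∆ t, μ.real (A i)ᶜ := measureReal_biUnion_finset_le _ _

end IndicatorBiInter

lemma card_Rn (n : ℕ × ℕ) : (Rn n).card = n.1 * n.2 := by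
  simp [Rn, Finset.card_Icc_prod]

lemma integral_abs_indicator_noExc_sub_le [IsFiniteMeasure (ℙ : Measure Ω)]
    {X : ℕ × ℕ → Ω → ℝ} (hX : ∀ i, AEMeasurable (X i)) (v : ℕ × ℕ → ℝ)
    (I J : Finset (ℕ × ℕ)) :
    ∫ ω, |(noExc X v I).indicator (fun _ => (1 : ℝ)) ω -
        (noExc X v J).indicator (fun _ => (1 : ℝ)) ω| ∂ℙ ≤
      ∑ i ∈ I ∆ J, pr {ω | X i ω > v i} := by
  have nullMeasurableSet_le_level (i : ℕ × ℕ) : NullMeasurableSet {ω | X i ω ≤ v i} ℙ :=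
    nullMeasurableSet_le (hX i) aemeasurable_const
  simpa only [noExc, pr, Measure.real, compl_ofPred, not_le, gt_iff_lt] using
    integral_abs_indicator_biInter_sub_le nullMeasurableSet_le_level I J

theorem lemmaA2_indicator_bound_general [IsFiniteMeasure (ℙ : Measure Ω)]
    {X : ℕ × ℕ → Ω → ℝ} (hX : ∀ i, AEMeasurable (X i))
    {u : ℕ × ℕ → ℕ × ℕ → ℝ} (hbdd : BoundedCond X u) :
    ∃ C : ℝ, ∀ l : ℕ × ℕ, (1, 1) ≤ l → ∀ J ⊆ Rn l,
      ∫ ω, |(noExc X (u l) J).indicator (fun _ => (1 : ℝ)) ω -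
          (noExc X (u l) (Rn l)).indicator (fun _ => (1 : ℝ)) ω| ∂ℙ ≤
        C * ((l.1 * l.2 - J.card : ℝ) / (l.1 * l.2)) := by
  obtain ⟨B, hB⟩ := hbdd
  refine ⟨B, fun l hl J hJ => ?_⟩
  have area_pos : (0 : ℝ) < l.1 * l.2 := mod_cast Nat.mul_pos hl.1 hl.2
  have card_sdiff : ((Rn l \ J).card : ℝ) = l.1 * l.2 - J.card := by
    rw [Finset.cast_card_sdiff hJ, card_Rn, Nat.cast_mul]
  have pr_exceed_le : ∀ i ∈ Rn l \ J, pr {ω | X i ω > u l i} ≤ B / (l.1 * l.2) := fun i hi =>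
    (le_div_iff₀' area_pos).2 (hB l i (Finset.sdiff_subset hi))
  calc _ ≤ ∑ i ∈ J ∆ Rn l, pr {ω | X i ω > u l i} :=
        integral_abs_indicator_noExc_sub_le hX (u l) J (Rn l)
    _ = ∑ i ∈ Rn l \ J, pr {ω | X i ω > u l i} := by rw [symmDiff_of_le hJ]
    _ ≤ (Rn l \ J).card • (B / (l.1 * l.2)) := Finset.sum_le_card_nsmul _ _ _ pr_exceed_le
    _ = B * ((l.1 * l.2 - J.card) / (l.1 * l.2)) := by
        rw [nsmul_eq_mul, card_sdiff]
        ring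

/-- **Lemma A.2.** Under the boundedness condition, for `k ≠ l` in `R_n` with
`u_{l,i} ≥ u_{k,i}`, the `L¹`-distance between the indicator of no exceedance over
`R_l ∖ R_k` and over `R_l` (both at levels `u_l`) is
`O((l₁l₂ − #(R_l ∖ R_k))/(l₁l₂))` uniformly in `k, l, n`. -/
theorem lemmaA2_indicator_bound
    {Ω : Type*} [MeasureSpace Ω] [IsProbabilityMeasure (ℙ : Measure Ω)]
    (X : ℕ × ℕ → Ω → ℝ) (hX : ∀ i, Measurable (X i))
    (u : ℕ × ℕ → ℕ × ℕ → ℝ)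
    (hbdd : BoundedCond X u) :
    ∃ C : ℝ, ∀ n k l : ℕ × ℕ, k ∈ Rn n → l ∈ Rn n → k ≠ l →
      (∀ i : ℕ × ℕ, u k i ≤ u l i) →
      (∫ ω, |(noExc X (u l) ((Rn l) \ (Rn k))).indicator (fun _ => (1 : ℝ)) ω -
          (noExc X (u l) (Rn l)).indicator (fun _ => (1 : ℝ)) ω| ∂ℙ) ≤
        C * ((l.1 * l.2 - ((Rn l) \ (Rn k)).card : ℝ) / (l.1 * l.2)) := by
  obtain ⟨C, hC⟩ := lemmaA2_indicator_bound_general (fun i => (hX i).aemeasurable) hbdd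
  exact ⟨C, fun n k l _ hl _ _ => hC l (Finset.mem_Icc.1 hl).1 _ Finset.sdiff_subset⟩
end
end

section
/- Let η_i, i ∈ (ℤ₊)², be uniformly bounded random variables on a common probability space. Assume that for some ε > 0, Var((log n₁ · log n₂)⁻¹ Σ_{k∈R_n} (k₁k₂)⁻¹ η_k) = O((log n₁ · log n₂)^{−(1+ε)}). Then (log n₁ · log n₂)⁻¹ Σ_{k∈R_n} (k₁k₂)⁻¹ (η_k − E η_k) → 0 almost surely as n → ∞. -/
/-!
Almost sure convergence is first obtained along the sparse grid of indexes `(u i, u j)` with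
`u i = 2 ^ (i + 1) ^ a`. A variance bound `(log n₁ log n₂) ^ (-δ)` is summable over this grid as
soon as `a * δ > 1`, so there the squares of the centered averages are almost surely summable. To
fill the gaps, note that the total weight of `R_n` is asymptotic to `log n₁ log n₂` and that
`log (u i) / log (u (i + 1)) → 1`, however large `a` is. Hence the largest grid rectangle inside
`R_n` carries asymptotically all the weight of `R_n`, and bounded variables cannot contribute
outside it in the limit.
-/

open MeasureTheory ProbabilityTheory Filter Set
open scoped ProbabilityTheory

noncomputable section

variable {Ω : Type*} [MeasureSpace Ω]

/-- The sum of `a` over `R_n` with the weights `(k₁k₂)⁻¹` of the logarithmic average. -/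
def logSum (a : ℕ × ℕ → ℝ) (n : ℕ × ℕ) : ℝ := ∑ k ∈ Rn n, (k.1 * k.2 : ℝ)⁻¹ * a k

/-- The logarithmic average of `a` over `R_n`, normalized by `log n₁ · log n₂`; since this only
approximates the total weight, constants are preserved only in the limit. -/
def logAverage (a : ℕ × ℕ → ℝ) (n : ℕ × ℕ) : ℝ := (Real.log n.1 * Real.log n.2)⁻¹ * logSum a n

lemma logSum_one (n : ℕ × ℕ) : logSum 1 n = harmonic n.1 * harmonic n.2 := by
  have hRn : Rn n = Finset.Icc 1 n.1 ×ˢ Finset.Icc 1 n.2 := rfl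
  simp only [logSum, hRn, Finset.sum_product, harmonic_eq_sum_Icc, Rat.cast_sum, Rat.cast_inv,
    Rat.cast_natCast, Finset.sum_mul_sum, mul_inv, Pi.one_apply, mul_one]

lemma abs_logSum_sub_logSum_le {a : ℕ × ℕ → ℝ} {K : ℝ} (ha : ∀ k, |a k| ≤ K) {m n : ℕ × ℕ}
    (hmn : m ≤ n) : |logSum a n - logSum a m| ≤ K * (logSum 1 n - logSum 1 m) := by
  have hsub : Rn m ⊆ Rn n := Finset.Icc_subset_Icc le_rfl hmn
  simp only [logSum, ← Finset.sum_sdiff_eq_sub hsub, Finset.mul_sum]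
  refine Finset.abs_sum_le_sum_abs _ _ |>.trans (Finset.sum_le_sum fun k _ => ?_)
  have hweight : (0 : ℝ) ≤ (k.1 * k.2 : ℝ)⁻¹ := by positivity
  rw [abs_mul, abs_of_nonneg hweight, Pi.one_apply, mul_one, mul_comm]
  exact mul_le_mul_of_nonneg_right (ha k) hweight

lemma logAverage_sub (a b : ℕ × ℕ → ℝ) (n : ℕ × ℕ) :
    logAverage (a - b) n = logAverage a n - logAverage b n := by
  simp only [logAverage, logSum, Pi.sub_apply, mul_sub, Finset.sum_sub_distrib]

lemma memLp_logAverage {Ω : Type*} [MeasurableSpace Ω] {μ : Measure Ω} {p : ENNReal}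
    {η : ℕ × ℕ → Ω → ℝ} (hη : ∀ k, MemLp (η k) p μ) (n : ℕ × ℕ) :
    MemLp (fun ω => logAverage (fun k => η k ω) n) p μ :=
  (memLp_finsetSum _ fun k _ => (hη k).const_mul _).const_mul _

lemma integral_logAverage {Ω : Type*} [MeasurableSpace Ω] {μ : Measure Ω}
    {η : ℕ × ℕ → Ω → ℝ} (hη : ∀ k, Integrable (η k) μ) (n : ℕ × ℕ) :
    ∫ ω, logAverage (fun k => η k ω) n ∂μ = logAverage (fun k => ∫ ω, η k ω ∂μ) n := by
  simp only [logAverage, logSum]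
  rw [integral_const_mul, integral_finsetSum _ fun k _ => (hη k).const_mul _]
  simp only [integral_const_mul]

lemma tendsto_harmonic_div_log :
    Tendsto (fun n : ℕ => (harmonic n : ℝ) / Real.log n) atTop (nhds 1) := by
  have hlog : Tendsto (fun n : ℕ => Real.log n) atTop atTop :=
    Real.tendsto_log_atTop.comp tendsto_natCast_atTop_atTop
  have hlim := (Real.tendsto_harmonic_sub_log.div_atTop hlog).add_const 1
  rw [zero_add] at hlim
  refine hlim.congr' ?_
  filter_upwards [hlog.eventually_ne_atTop 0] with n hn
  field_simp
  ring

lemma tendsto_fst_atTop {α β : Type*} [Preorder α] [Preorder β] :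
    Tendsto (Prod.fst : α × β → α) atTop atTop := by
  rw [← prod_atTop_atTop_eq]
  exact tendsto_fst

lemma tendsto_snd_atTop {α β : Type*} [Preorder α] [Preorder β] :
    Tendsto (Prod.snd : α × β → β) atTop atTop := by
  rw [← prod_atTop_atTop_eq]
  exact tendsto_snd

lemma tendsto_logAverage_one : Tendsto (logAverage 1) atTop (nhds 1) := by
  have hlim := (tendsto_harmonic_div_log.comp tendsto_fst_atTop).mul
    (tendsto_harmonic_div_log.comp tendsto_snd_atTop)
  rw [one_mul] at hlim
  refine hlim.congr fun n => ?_
  rw [logAverage, logSum_one, Function.comp_apply, Function.comp_apply, div_mul_div_comm,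
    div_eq_inv_mul]

/-- The normalization of `logAverage · m` relative to that of `logAverage · n`. -/
def logRatio (m n : ℕ × ℕ) : ℝ :=
  (Real.log m.1 / Real.log n.1) * (Real.log m.2 / Real.log n.2)

lemma logRatio_mul_logAverage {m n : ℕ × ℕ} (h : logRatio m n ≠ 0) (a : ℕ × ℕ → ℝ) :
    logRatio m n * logAverage a m = (Real.log n.1 * Real.log n.2)⁻¹ * logSum a m := by
  have hm : Real.log m.1 * Real.log m.2 ≠ 0 := by
    rw [logRatio, div_mul_div_comm] at h
    exact (div_ne_zero_iff.1 h).1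
  rw [logRatio, div_mul_div_comm, logAverage, div_mul_eq_mul_div, mul_inv_cancel_left₀ hm,
    div_eq_inv_mul]

lemma abs_logAverage_sub_le {a : ℕ × ℕ → ℝ} {K : ℝ} (ha : ∀ k, |a k| ≤ K) {m n : ℕ × ℕ}
    (hmn : m ≤ n) (h : logRatio m n ≠ 0) :
    |logAverage a n - logRatio m n * logAverage a m| ≤
      K * (logAverage 1 n - logRatio m n * logAverage 1 m) := by
  have hnorm : 0 ≤ (Real.log n.1 * Real.log n.2)⁻¹ :=
    inv_nonneg.2 (mul_nonneg (Real.log_natCast_nonneg _) (Real.log_natCast_nonneg _))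
  rw [logRatio_mul_logAverage h, logRatio_mul_logAverage h, logAverage, logAverage, ← mul_sub,
    ← mul_sub, abs_mul, abs_of_nonneg hnorm, mul_left_comm]
  exact mul_le_mul_of_nonneg_left (abs_logSum_sub_logSum_le ha hmn) hnorm

lemma tendsto_logAverage_zero_of_logRatio {a : ℕ × ℕ → ℝ} {K : ℝ} (ha : ∀ k, |a k| ≤ K)
    {ν : ℕ × ℕ → ℕ × ℕ} (hν : Tendsto ν atTop atTop) (hle : ∀ᶠ n in atTop, ν n ≤ n)
    (hratio : Tendsto (fun n => logRatio (ν n) n) atTop (nhds 1))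
    (hlim : Tendsto (fun n => logAverage a (ν n)) atTop (nhds 0)) :
    Tendsto (logAverage a) atTop (nhds 0) := by
  have hgap : Tendsto (fun n => K * (logAverage 1 n - logRatio (ν n) n * logAverage 1 (ν n)))
      atTop (nhds 0) := by
    simpa using (tendsto_logAverage_one.sub
      (hratio.mul (tendsto_logAverage_one.comp hν))).const_mul K
  have hdiff : Tendsto (fun n => logAverage a n - logRatio (ν n) n * logAverage a (ν n))
      atTop (nhds 0) := by
    refine squeeze_zero_norm' ?_ hgap
    filter_upwards [hle, hratio.eventually_ne one_ne_zero] with n hn hn'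
    exact abs_logAverage_sub_le ha hn hn'
  simpa using hdiff.add (hratio.mul hlim)

lemma exists_tendsto_atTop_bracket {u : ℕ → ℕ} (hu : StrictMono u) :
    ∃ i : ℕ → ℕ, Tendsto i atTop atTop ∧ ∀ᶠ n in atTop, u (i n) ≤ n ∧ n < u (i n + 1) := by
  let i : ℕ → ℕ := fun n => Nat.findGreatest (fun j => u j ≤ n) n
  have le_index {j n : ℕ} (h : u j ≤ n) : j ≤ i n :=
    Nat.le_findGreatest (P := fun j => u j ≤ n) (hu.le_apply.trans h) h
  refine ⟨i, tendsto_atTop.2 fun j => (eventually_ge_atTop (u j)).mono fun n => le_index, ?_⟩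
  filter_upwards [eventually_ge_atTop (u 0)] with n hn
  refine ⟨Nat.findGreatest_spec (P := fun j => u j ≤ n) n.zero_le hn, ?_⟩
  by_contra! h
  exact (le_index h).not_gt (Nat.lt_succ_self _)

lemma tendsto_log_div_log_of_bracket {u i : ℕ → ℕ} (hi : Tendsto i atTop atTop)
    (hbracket : ∀ᶠ n in atTop, u (i n) ≤ n ∧ n < u (i n + 1))
    (hratio : Tendsto (fun j => Real.log (u j) / Real.log (u (j + 1))) atTop (nhds 1)) :
    Tendsto (fun n : ℕ => Real.log (u (i n)) / Real.log n) atTop (nhds 1) := by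
  refine tendsto_of_tendsto_of_tendsto_of_le_of_le' (hratio.comp hi) tendsto_const_nhds ?_ ?_
  · filter_upwards [hbracket, eventually_gt_atTop 1] with n hn hn1
    have hlog : 0 < Real.log n := Real.log_pos (by exact_mod_cast hn1)
    have hpos : (0 : ℝ) < n := by positivity
    have hlt : (n : ℝ) ≤ u (i n + 1) := by exact_mod_cast hn.2.le
    exact div_le_div_of_nonneg_left (Real.log_natCast_nonneg _) hlog (Real.log_le_log hpos hlt)
  · filter_upwards [hbracket] with n hn
    refine div_le_one_of_le₀ ?_ (Real.log_natCast_nonneg _)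
    rcases (u (i n)).eq_zero_or_pos with hzero | hpos
    · simp only [hzero, Nat.cast_zero, Real.log_zero, Real.log_natCast_nonneg]
    · exact Real.log_le_log (by exact_mod_cast hpos) (by exact_mod_cast hn.1)

lemma tendsto_logAverage_zero_of_grid {a : ℕ × ℕ → ℝ} {K : ℝ} (ha : ∀ k, |a k| ≤ K)
    {u : ℕ → ℕ} (hu : StrictMono u)
    (hratio : Tendsto (fun j => Real.log (u j) / Real.log (u (j + 1))) atTop (nhds 1))
    (hlim : Tendsto (fun q : ℕ × ℕ => logAverage a (u q.1, u q.2)) atTop (nhds 0)) :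
    Tendsto (logAverage a) atTop (nhds 0) := by
  obtain ⟨i, hi, hbracket⟩ := exists_tendsto_atTop_bracket hu
  have hlog := tendsto_log_div_log_of_bracket hi hbracket hratio
  have hi₂ : Tendsto (fun n : ℕ × ℕ => (i n.1, i n.2)) atTop atTop :=
    hi.prod_atTop hi
  have hu₂ : Tendsto (fun q : ℕ × ℕ => (u q.1, u q.2)) atTop atTop :=
    hu.tendsto_atTop.prod_atTop hu.tendsto_atTop
  have hle : ∀ᶠ n : ℕ × ℕ in atTop, (u (i n.1), u (i n.2)) ≤ n := by
    filter_upwards [tendsto_fst_atTop.eventually hbracket, tendsto_snd_atTop.eventually hbracket]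
      with n h₁ h₂ using ⟨h₁.1, h₂.1⟩
  have hlogRatio : Tendsto (fun n : ℕ × ℕ => logRatio (u (i n.1), u (i n.2)) n) atTop (nhds 1) := by
    simpa only [logRatio, Function.comp_def, one_mul] using
      (hlog.comp tendsto_fst_atTop).mul (hlog.comp tendsto_snd_atTop)
  exact tendsto_logAverage_zero_of_logRatio ha (hu₂.comp hi₂) hle hlogRatio (hlim.comp hi₂)

/-- The sequence `2 ^ (i + 1) ^ a`, whose consecutive logarithms have ratio tending to `1` while the
logarithms themselves grow with the power `a`. The shift keeps all its values at least `2`, where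
the logarithm is positive. -/
def sparseScale (a i : ℕ) : ℕ := 2 ^ (i + 1) ^ a

lemma two_le_sparseScale (a i : ℕ) : 2 ≤ sparseScale a i :=
  Nat.le_self_pow (pow_ne_zero _ i.succ_ne_zero) 2

lemma strictMono_sparseScale {a : ℕ} (ha : a ≠ 0) : StrictMono (sparseScale a) := fun _ _ hij =>
  Nat.pow_lt_pow_right one_lt_two (Nat.pow_lt_pow_left (Nat.succ_lt_succ hij) ha)

lemma log_sparseScale (a i : ℕ) :
    Real.log (sparseScale a i) = ((i + 1 : ℕ) : ℝ) ^ a * Real.log 2 := by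
  simp only [sparseScale, Nat.cast_pow, Nat.cast_ofNat, Real.log_pow]

lemma tendsto_log_sparseScale_div_log_succ (a : ℕ) :
    Tendsto (fun i => Real.log (sparseScale a i) / Real.log (sparseScale a (i + 1)))
      atTop (nhds 1) := by
  have hlim := ((tendsto_natCast_div_add_atTop (1 : ℝ)).comp (tendsto_add_atTop_nat 1)).pow a
  rw [one_pow] at hlim
  refine hlim.congr fun i => ?_
  rw [log_sparseScale, log_sparseScale, mul_div_mul_right _ _ (Real.log_pos one_lt_two).ne',
    ← div_pow, Function.comp_apply, Nat.cast_succ (i + 1)]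

lemma summable_log_sparseScale_rpow_neg {a : ℕ} {δ : ℝ} (h : 1 < a * δ) :
    Summable fun i => Real.log (sparseScale a i) ^ (-δ) := by
  have hsum := (summable_nat_add_iff 1).2 (Real.summable_nat_rpow.2 (neg_lt_neg h))
  refine (hsum.mul_right (Real.log 2 ^ (-δ))).congr fun i => ?_
  rw [log_sparseScale, Real.mul_rpow (by positivity) (Real.log_nonneg one_le_two),
    ← Real.rpow_natCast_mul (by positivity), mul_neg]

lemma summable_log_sparseScale_mul_rpow_neg {a : ℕ} {δ : ℝ} (h : 1 < a * δ) :
    Summable fun q : ℕ × ℕ =>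
      (Real.log (sparseScale a q.1) * Real.log (sparseScale a q.2)) ^ (-δ) := by
  have hsum := summable_log_sparseScale_rpow_neg h
  have hnonneg (i : ℕ) : 0 ≤ Real.log (sparseScale a i) ^ (-δ) :=
    Real.rpow_nonneg (Real.log_natCast_nonneg _) _
  refine (hsum.mul_of_nonneg hsum hnonneg hnonneg).congr fun q => ?_
  rw [Real.mul_rpow (Real.log_natCast_nonneg _) (Real.log_natCast_nonneg _)]

lemma ae_tendsto_sub_integral_of_tsum_evariance_ne_top {Ω ι : Type*} [MeasurableSpace Ω]
    {μ : Measure Ω} [Countable ι] {X : ι → Ω → ℝ} (hX : ∀ i, AEMeasurable (X i) μ)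
    (hsum : ∑' i, evariance (X i) μ ≠ ⊤) :
    ∀ᵐ ω ∂μ, Tendsto (fun i => X i ω - ∫ ω', X i ω' ∂μ) cofinite (nhds 0) := by
  have hmeas (i : ι) : AEMeasurable (fun ω => ‖X i ω - ∫ ω', X i ω' ∂μ‖ₑ ^ 2) μ :=
    ((hX i).sub_const _).enorm.pow_const 2
  have hint : ∫⁻ ω, ∑' i, ‖X i ω - ∫ ω', X i ω' ∂μ‖ₑ ^ 2 ∂μ ≠ ⊤ := by
    rwa [lintegral_tsum hmeas]
  filter_upwards [ae_lt_top' (AEMeasurable.tsum hmeas) hint] with ω hω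
  have hsq := ENNReal.tendsto_cofinite_zero_of_tsum_ne_top hω.ne
  rw [tendsto_zero_iff_enorm_tendsto_zero]
  simpa [← ENNReal.rpow_natCast_mul] using hsq.ennrpow_const (1 / 2)

lemma ae_tendsto_logAverage_sub_integral_sparseScale {Ω : Type*} [MeasurableSpace Ω]
    {μ : Measure Ω} [IsFiniteMeasure μ] {η : ℕ × ℕ → Ω → ℝ} (hη : ∀ k, MemLp (η k) 2 μ)
    {a : ℕ} {C δ : ℝ} (ha : 1 < a * δ)
    (hvar : ∀ n : ℕ × ℕ, 2 ≤ n.1 → 2 ≤ n.2 →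
      variance (fun ω => logAverage (fun k => η k ω) n) μ ≤
        C * (Real.log n.1 * Real.log n.2) ^ (-δ)) :
    ∀ᵐ ω ∂μ, Tendsto (fun q : ℕ × ℕ => logAverage (fun k => η k ω - ∫ ω', η k ω' ∂μ)
      (sparseScale a q.1, sparseScale a q.2)) atTop (nhds 0) := by
  let X (q : ℕ × ℕ) (ω : Ω) := logAverage (fun k => η k ω) (sparseScale a q.1, sparseScale a q.2)
  have hX (q : ℕ × ℕ) : MemLp (X q) 2 μ := memLp_logAverage hη _
  have hsum : Summable fun q => variance (X q) μ :=
    ((summable_log_sparseScale_mul_rpow_neg ha).mul_left C).of_nonneg_of_le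
      (fun q => variance_nonneg _ _)
      fun q => hvar _ (two_le_sparseScale a q.1) (two_le_sparseScale a q.2)
  have hesum : ∑' q, evariance (X q) μ ≠ ⊤ := by
    simpa only [(hX _).ofReal_variance_eq] using hsum.tsum_ofReal_ne_top
  filter_upwards [ae_tendsto_sub_integral_of_tsum_evariance_ne_top
    (fun q => (hX q).aemeasurable) hesum] with ω hω
  refine (hω.mono_left atTop_le_cofinite).congr fun q => ?_
  rw [integral_logAverage fun k => (hη k).integrable one_le_two, ← logAverage_sub]
  rfl

theorem lemmaA3_variance_asclt_general {Ω : Type*} [MeasurableSpace Ω] {μ : Measure Ω}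
    [IsProbabilityMeasure μ] {η : ℕ × ℕ → Ω → ℝ} (hmeas : ∀ k, AEMeasurable (η k) μ)
    {B : ℝ} (hB : ∀ k, ∀ᵐ ω ∂μ, |η k ω| ≤ B) {δ : ℝ} (hδ : 0 < δ)
    (hvar : ∃ C : ℝ, ∀ n : ℕ × ℕ, 2 ≤ n.1 → 2 ≤ n.2 →
      variance (fun ω => logAverage (fun k => η k ω) n) μ ≤
        C * (Real.log n.1 * Real.log n.2) ^ (-δ)) :
    ∀ᵐ ω ∂μ, Tendsto (logAverage fun k => η k ω - ∫ ω', η k ω' ∂μ) atTop (nhds 0) := by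
  obtain ⟨C, hC⟩ := hvar
  obtain ⟨a, ha⟩ : ∃ a : ℕ, 1 < a * δ := by simpa using exists_lt_nsmul hδ 1
  have ha0 : a ≠ 0 := by
    rintro rfl
    norm_num at ha
  have hLp (k : ℕ × ℕ) : MemLp (η k) 2 μ := MemLp.of_bound (hmeas k).aestronglyMeasurable B (hB k)
  have hmean (k : ℕ × ℕ) : |∫ ω, η k ω ∂μ| ≤ B := by
    simpa using norm_integral_le_of_norm_le_const (f := η k) (hB k)
  filter_upwards [ae_tendsto_logAverage_sub_integral_sparseScale hLp ha hC, ae_all_iff.2 hB]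
    with ω hgrid hbound
  exact tendsto_logAverage_zero_of_grid
    (fun k => (abs_sub _ _).trans (add_le_add (hbound k) (hmean k))) (strictMono_sparseScale ha0)
    (tendsto_log_sparseScale_div_log_succ a) hgrid

/-- **Lemma A.3.** If `η_i` are uniformly bounded random variables and the variance of
the log-average `(log n₁ log n₂)⁻¹ Σ_{k∈R_n} (k₁k₂)⁻¹ η_k` is
`O((log n₁ · log n₂)^{−(1+ε)})` for some `ε > 0`, then the log-average of the centered
variables tends to `0` almost surely. -/
theorem lemmaA3_variance_asclt
    {Ω : Type*} [MeasureSpace Ω] [IsProbabilityMeasure (ℙ : Measure Ω)]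
    (η : ℕ × ℕ → Ω → ℝ) (hmeas : ∀ i, Measurable (η i))
    (B : ℝ) (hB : ∀ i : ℕ × ℕ, ∀ᵐ ω, |η i ω| ≤ B)
    (ε : ℝ) (hε : 0 < ε)
    (hvar : ∃ C : ℝ, ∀ n : ℕ × ℕ, 2 ≤ n.1 → 2 ≤ n.2 →
      variance (fun ω => (Real.log n.1 * Real.log n.2)⁻¹ *
          ∑ k ∈ Rn n, (k.1 * k.2 : ℝ)⁻¹ * η k ω) ℙ ≤
        C * (Real.log n.1 * Real.log n.2) ^ (-(1 + ε))) :
    ∀ᵐ ω, Tendsto (fun n : ℕ × ℕ => (Real.log n.1 * Real.log n.2)⁻¹ *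
        ∑ k ∈ Rn n, (k.1 * k.2 : ℝ)⁻¹ * (η k ω - ∫ ω', η k ω' ∂ℙ))
      atTop (nhds 0) := by
  have hδ : 0 < 1 + ε := by linarith
  exact lemmaA3_variance_asclt_general (fun i => (hmeas i).aemeasurable) hB hδ hvar
end
end
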